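/- arXiv:1506.08980 — 2 statements merged into one kernel-verified Lean document; each statement's English description precedes it below -/
import Mathlib

section
/- Let X be a zero-dimensional space with Banaschewski compactification bX. If bX is scattered, then X is pseudocompact. -/
open Set TopologicalSpace

/-!
If a zero-dimensional space `X` carries an unbounded continuous real function, it carries an
unbounded continuous function `φ : X → ℕ`. Choose an infinite `D ⊆ X` on which `φ` is injective:
every subset of `D` is cut out by a clopen subset of `X`, hence by a clopen subset of the
compactification `B`. The accumulation points of such a `D` in `B` form a nonempty set without
isolated points, just as `βℕ \ ℕ` has none: an infinite part of `D` near an accumulation point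
splits into two infinite halves, separated by a clopen set and hence accumulating at different
points.
-/

open Function Topology

section ClopenTraces

variable {X B : Type*} [TopologicalSpace X] [TopologicalSpace B]

/-- Every subset of `D` is the trace on `D` of a clopen subset of the ambient space. In a compact
Hausdorff space this implies that `D` is discrete with closure `βD`, and it stands in for that
condition in finding a set without isolated points among the accumulation points of `D`. -/
def HasClopenTraces (D : Set X) : Prop :=
  ∀ S ⊆ D, ∃ C, IsClopen C ∧ D ∩ C = S

lemma HasClopenTraces.of_injOn {Y : Type*} [TopologicalSpace Y] [DiscreteTopology Y] {φ : X → Y}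
    (hφ : Continuous φ) {D : Set X} (hD : InjOn φ D) : HasClopenTraces D := fun S hS =>
  ⟨φ ⁻¹' (φ '' S), (isClopen_discrete _).preimage hφ, by
    rw [inter_comm, hD.preimage_image_inter hS]⟩

lemma HasClopenTraces.image {D : Set X} (hD : HasClopenTraces D) {i : X → B}
    (hi : ∀ K : Set X, IsClopen K → ∃ C : Set B, IsClopen C ∧ i ⁻¹' C = K) :
    HasClopenTraces (i '' D) := by
  intro S hS
  obtain ⟨K, hK, hDK⟩ := hD (D ∩ i ⁻¹' S) inter_subset_left
  obtain ⟨C, hC, rfl⟩ := hi K hK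
  refine ⟨C, hC, ?_⟩
  rw [← image_inter_preimage, hDK, image_inter_preimage, inter_eq_right.2 hS]

lemma HasClopenTraces.injOn {D : Set X} (hD : HasClopenTraces D) {i : X → B}
    (hi : ∀ K : Set X, IsClopen K → ∃ C : Set B, IsClopen C ∧ i ⁻¹' C = K) :
    InjOn i D := by
  intro x hx y hy hxy
  obtain ⟨K, hK, hDK⟩ := hD {x} (singleton_subset_iff.2 hx)
  obtain ⟨C, -, rfl⟩ := hi K hK
  have hxC : i x ∈ C := (hDK.ge rfl).2
  exact (hDK.le ⟨hy, show i y ∈ C from hxy ▸ hxC⟩).symm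

lemma exists_infinite_subset_infinite_diff {α : Type*} {s : Set α} (hs : s.Infinite) :
    ∃ t ⊆ s, t.Infinite ∧ (s \ t).Infinite := by
  obtain ⟨t, u, rfl, hdisj, hcard⟩ := hs.exists_union_disjoint_cardinal_eq_of_infinite
  obtain ⟨e⟩ := Cardinal.eq.1 hcard
  have hiff : t.Finite ↔ u.Finite := e.set_finite_iff
  rw [infinite_union, Set.Infinite, Set.Infinite, hiff, or_self] at hs
  refine ⟨t, subset_union_left, mt hiff.1 hs, ?_⟩
  rwa [union_sdiff_cancel_left hdisj.inter_eq.le]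

lemma HasClopenTraces.preperfect_derivedSet [CompactSpace B] [T2Space B] {D : Set B}
    (hD : HasClopenTraces D) : Preperfect (derivedSet D) := by
  refine fun a ha => accPt_iff_nhds.2 fun U hU => ?_
  obtain ⟨V, hVa, hV, hVU⟩ := exists_mem_nhds_isClosed_subset hU
  have hinf : (V ∩ D).Infinite := .of_accPt (AccPt.nhds_inter ha hVa)
  obtain ⟨S, hSV, hS, hS'⟩ := exists_infinite_subset_infinite_diff hinf
  obtain ⟨C, hC, hDC⟩ := hD S (hSV.trans inter_subset_right)
  have hSC : S ⊆ V ∩ C := fun x hx => ⟨(hSV hx).1, (hDC.ge hx).2⟩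
  have hSC' : (V ∩ D) \ S ⊆ V ∩ Cᶜ := fun x hx => ⟨hx.1.1, fun hxC => hx.2 (hDC.le ⟨hx.1.2, hxC⟩)⟩
  obtain ⟨x, hxVC, hx⟩ := hS.exists_accPt_of_subset_isCompact (hV.inter hC.1).isCompact hSC
  obtain ⟨y, hyVC, hy⟩ :=
    hS'.exists_accPt_of_subset_isCompact (hV.inter hC.compl.1).isCompact hSC'
  have hxD : x ∈ derivedSet D := derivedSet_mono _ _ (hSV.trans inter_subset_right) hx
  have hyD : y ∈ derivedSet D := derivedSet_mono _ _ (sdiff_subset.trans inter_subset_right) hy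
  have hxy : x ≠ y := fun h => hyVC.2 (h ▸ hxVC.2)
  by_cases hxa : x = a
  · exact ⟨y, ⟨hVU hyVC.1, hyD⟩, fun hya => hxy (hxa.trans hya.symm)⟩
  · exact ⟨x, ⟨hVU hxVC.1, hxD⟩, hxa⟩

end ClopenTraces

lemma not_preperfect_of_inter_eq_singleton {B : Type*} [TopologicalSpace B] {A U : Set B} {a : B}
    (hU : IsOpen U) (hUA : U ∩ A = {a}) : ¬ Preperfect A := by
  intro hA
  obtain ⟨haU, haA⟩ := hUA.ge rfl
  obtain ⟨y, hy, hya⟩ := accPt_iff_nhds.1 (hA a haA) U (hU.mem_nhds haU)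
  exact hya (hUA.le hy)

section Unbounded

variable {X : Type*} [TopologicalSpace X]

lemma locallyFinite_of_forall_lt {f : X → ℝ} (hf : Continuous f) {U : ℕ → Set X}
    (hU : ∀ n, ∀ x ∈ U n, (n : ℝ) < f x) : LocallyFinite U := by
  intro x
  refine ⟨{y | f y < f x + 1}, (isOpen_lt hf continuous_const).mem_nhds (lt_add_one (f x)), ?_⟩
  refine (finite_Iio ⌈f x + 1⌉₊).subset ?_
  rintro n ⟨y, hyU, hy⟩
  exact Nat.lt_ceil.2 ((hU n y hyU).trans hy)

lemma exists_continuous_nat_not_bddAbove_of_locallyFinite {U : ℕ → Set X}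
    (hU : LocallyFinite U) (hclopen : ∀ n, IsClopen (U n)) (hne : ∀ n, (U n).Nonempty) :
    ∃ φ : X → ℕ, Continuous φ ∧ ¬ BddAbove (range φ) := by
  let g (n : ℕ) : X → ℕ := (U n).indicator fun _ => n
  have hg : LocallyFinite fun n => support (g n) := hU.subset fun n => support_indicator_subset
  refine ⟨fun x => ∑ᶠ n, g n x,
    continuous_finsum (fun n => (hclopen n).continuous_indicator continuous_const) hg, ?_⟩
  refine not_bddAbove_iff.2 fun n => ?_
  obtain ⟨x, hx⟩ := hne (n + 1)
  refine ⟨_, mem_range_self x, n.lt_succ_self.trans_le ?_⟩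
  calc n + 1 = g (n + 1) x := (indicator_of_mem hx fun _ => n + 1).symm
    _ ≤ ∑ᶠ m, g m x := single_le_finsum (n + 1) (hg.point_finite x) fun _ => Nat.zero_le _

lemma exists_continuous_nat_not_bddAbove (hX : IsTopologicalBasis {s : Set X | IsClopen s})
    {f : X → ℝ} (hf : Continuous f) (hunb : ¬ BddAbove (range f)) :
    ∃ φ : X → ℕ, Continuous φ ∧ ¬ BddAbove (range φ) := by
  have hlarge : ∀ n : ℕ, ∃ x, (n : ℝ) < f x := fun n => by
    simpa only [exists_range_iff] using not_bddAbove_iff.1 hunb n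
  choose x hx using hlarge
  choose U hU hxU hUf using fun n =>
    hX.exists_subset_of_mem_open (hx n) (isOpen_lt continuous_const hf)
  exact exists_continuous_nat_not_bddAbove_of_locallyFinite (locallyFinite_of_forall_lt hf hUf) hU
    fun n => ⟨x n, hxU n⟩

lemma exists_infinite_hasClopenTraces (hX : IsTopologicalBasis {s : Set X | IsClopen s})
    {f : X → ℝ} (hf : Continuous f) (hunb : ¬ BddAbove (range f)) :
    ∃ D : Set X, D.Infinite ∧ HasClopenTraces D := by
  obtain ⟨φ, hφ, hφunb⟩ := exists_continuous_nat_not_bddAbove hX hf hunb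
  obtain ⟨D, -, hD⟩ := (surjOn_image φ univ).exists_bijOn_subset
  refine ⟨D, fun hfin => hφunb ?_, .of_injOn hφ hD.injOn⟩
  rw [← image_univ, ← hD.image_eq]
  exact (hfin.image φ).bddAbove

end Unbounded

lemma exists_isClopen_preimage_eq {X B : Type*} [TopologicalSpace X] [TopologicalSpace B]
    {i : X → B}
    (hext : ∀ g : X → Bool, Continuous g → ∃ G : B → Bool, Continuous G ∧ ∀ x, G (i x) = g x)
    {K : Set X} (hK : IsClopen K) : ∃ C : Set B, IsClopen C ∧ i ⁻¹' C = K := by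
  obtain ⟨G, hG, hGK⟩ := hext K.boolIndicator ((continuous_boolIndicator_iff_isClopen K).2 hK)
  refine ⟨G ⁻¹' {true}, (isClopen_discrete _).preimage hG, ?_⟩
  rw [← preimage_comp, show G ∘ i = K.boolIndicator from funext hGK, preimage_boolIndicator_true]

lemma isTopologicalBasis_isClopen_of_isInducing {X B : Type*} [TopologicalSpace X]
    [TopologicalSpace B] (hB : IsTopologicalBasis {s : Set B | IsClopen s}) {i : X → B}
    (hi : IsInducing i) : IsTopologicalBasis {s : Set X | IsClopen s} := by
  refine isTopologicalBasis_of_isOpen_of_nhds (fun _ hs => hs.isOpen) fun x U hx hU => ?_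
  obtain ⟨_, ⟨s, hs, rfl⟩, hxs, hsU⟩ := (hB.isInducing hi).exists_subset_of_mem_open hx hU
  exact ⟨i ⁻¹' s, hs.preimage hi.continuous, hxs, hsU⟩

theorem stmt_14_general {X B : Type*} [TopologicalSpace X]
    (hX : IsTopologicalBasis {s : Set X | IsClopen s})
    [TopologicalSpace B] [CompactSpace B] [T2Space B] (i : X → B)
    (hext : ∀ g : X → Bool, Continuous g → ∃ G : B → Bool, Continuous G ∧ ∀ x, G (i x) = g x)
    (hsc : ∀ A : Set B, A.Nonempty → ∃ a ∈ A, ∃ U : Set B, IsOpen U ∧ U ∩ A = {a}) :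
    ∀ f : X → ℝ, Continuous f → ∃ M : ℝ, ∀ x, |f x| ≤ M := by
  intro f hf
  suffices BddAbove (range fun x => |f x|) from
    this.imp fun M hM x => hM (mem_range_self x)
  by_contra hunb
  obtain ⟨D, hDinf, hD⟩ := exists_infinite_hasClopenTraces hX hf.abs hunb
  have hclopen (K : Set X) (hK : IsClopen K) := exists_isClopen_preimage_eq hext hK
  have hacc : (derivedSet (i '' D)).Nonempty :=
    (hDinf.image (hD.injOn hclopen)).exists_accPt_principal
  obtain ⟨a, -, U, hU, hUA⟩ := hsc _ hacc
  exact not_preperfect_of_inter_eq_singleton hU hUA (hD.image hclopen).preperfect_derivedSet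

/-- If the Banaschewski compactification `B` of a zero-dimensional space `X`
is scattered (every nonempty subset has a relatively isolated point), then `X` is
pseudocompact. -/
theorem stmt_14 {B : Type*} [TopologicalSpace B] [CompactSpace B] [T2Space B]
    (hB : IsTopologicalBasis {s : Set B | IsClopen s})
    (X : Set B) (hd : Dense X)
    (hext : ∀ g : X → Bool, Continuous g → ∃ G : B → Bool, Continuous G ∧ ∀ x : X, G x = g x)
    (hsc : ∀ A : Set B, A.Nonempty → ∃ a ∈ A, ∃ U : Set B, IsOpen U ∧ U ∩ A = {a}) :
    ∀ f : X → ℝ, Continuous f → ∃ M : ℝ, ∀ x, |f x| ≤ M :=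
  stmt_14_general (isTopologicalBasis_isClopen_of_isInducing hB .subtypeVal) Subtype.val hext hsc
end

section
/- Let X be a zero-dimensional space with Banaschewski compactification bX. Then bX is an almost P-space if and only if X is pseudocompact and X is an almost P-space. -/
/-!
Suppose first that `X` is pseudocompact and almost `P`, and let `p` lie in a `G_δ` subset `G` of
`B`. By complete regularity there is a zero set `Z` with `p ∈ Z ⊆ G`. A nonempty zero set
cannot miss a dense pseudocompact subspace, because the reciprocal of the function cutting it out
would be unbounded there. So `Z ∩ X` is a nonempty `G_δ` of `X` and has interior in `X`; as `Z`
is closed, it has interior in `B`.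

Conversely, let `B` be almost `P`. An unbounded continuous function on `X` would yield a
decreasing sequence of nonempty clopen subsets of `X` with empty intersection. Their closures in
`B` are clopen, so by compactness they meet in a nonempty `G_δ`, whose interior contains a point
of the dense set `X`.
-/

open Set TopologicalSpace

/-- A topological space is an almost `P`-space if every nonempty `G_δ` subset has
nonempty interior. -/
def AlmostPSpace (Y : Type*) [TopologicalSpace Y] : Prop :=
  ∀ G : Set Y, (∃ U : ℕ → Set Y, (∀ n, IsOpen (U n)) ∧ G = ⋂ n, U n) →
    G.Nonempty → (interior G).Nonempty

open Topology

/-- Pseudocompact spaces: every continuous real-valued function is bounded. No separation axiom is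
included. -/
def PseudocompactSpace (Y : Type*) [TopologicalSpace Y] : Prop :=
  ∀ f : Y → ℝ, Continuous f → ∃ M : ℝ, ∀ x, |f x| ≤ M

section AlmostP

variable {B : Type*} [TopologicalSpace B] {X : Set B}

lemma almostPSpace_iff_isGδ :
    AlmostPSpace B ↔ ∀ G : Set B, IsGδ G → G.Nonempty → (interior G).Nonempty := by
  simp only [AlmostPSpace, isGδ_iff_eq_iInter_nat]

lemma AlmostPSpace.interior_inter_dense_nonempty (hB : AlmostPSpace B) (hd : Dense X) {G : Set B}
    (hG : IsGδ G) (hne : G.Nonempty) : (interior G ∩ X).Nonempty :=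
  hd.inter_open_nonempty _ isOpen_interior (almostPSpace_iff_isGδ.1 hB G hG hne)

lemma AlmostPSpace.subtype_of_dense (hB : AlmostPSpace B) (hd : Dense X) : AlmostPSpace X := by
  rintro _ ⟨U, hU, rfl⟩ ⟨x, hx⟩
  choose V hV hVU using fun n => isOpen_induced_iff.1 (hU n)
  obtain rfl : (fun n => Subtype.val ⁻¹' V n) = U := funext hVU
  rw [← preimage_iInter] at hx ⊢
  obtain ⟨y, hyV, hyX⟩ := hB.interior_inter_dense_nonempty hd (.iInter_of_isOpen hV) ⟨x, hx⟩
  exact ⟨⟨y, hyX⟩, preimage_interior_subset_interior_preimage continuous_subtype_val hyV⟩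

lemma interior_nonempty_of_interior_preimage_val_nonempty (hd : Dense X) {Z : Set B}
    (hZ : IsClosed Z) (h : (interior (Subtype.val ⁻¹' Z : Set X)).Nonempty) :
    (interior Z).Nonempty := by
  obtain ⟨y, hy⟩ := h
  obtain ⟨_, hsub, hopen, hyW⟩ := mem_interior.1 hy
  obtain ⟨W, hW, rfl⟩ := isOpen_induced_iff.1 hopen
  have hWX : W ∩ X ⊆ Z := fun z hz => hsub (show (⟨z, hz.2⟩ : X) ∈ Subtype.val ⁻¹' W from hz.1)
  have hWZ : W ⊆ Z := (hd.open_subset_closure_inter hW).trans (closure_minimal hWX hZ)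
  exact ⟨y, mem_interior.2 ⟨W, hWZ, hW, hyW⟩⟩

-- The countably many functions separating `p` from the complements of the open sets are combined
-- through a metric on the countable power of the unit interval.
lemma exists_continuous_preimage_zero_subset_of_isGδ [CompletelyRegularSpace B] {G : Set B}
    (hG : IsGδ G) {p : B} (hp : p ∈ G) :
    ∃ h : B → ℝ, Continuous h ∧ h p = 0 ∧ h ⁻¹' {0} ⊆ G := by
  obtain ⟨U, hU, rfl⟩ := hG.eq_iInter_nat
  choose f hf hfp hfU using fun n =>
    CompletelyRegularSpace.completely_regular_isOpen p (U n) (hU n) (mem_iInter.1 hp n)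
  let := metrizableSpaceMetric (ℕ → unitInterval)
  let F : B → ℕ → unitInterval := fun b n => f n b
  have hF : Continuous F := continuous_pi hf
  refine ⟨fun b => dist (F b) (F p), hF.dist continuous_const, dist_self _, fun b hb => ?_⟩
  refine mem_iInter.2 fun n => by_contra fun hbU => zero_ne_one (α := unitInterval) ?_
  calc (0 : unitInterval) = f n p := (hfp n).symm
    _ = f n b := (congrFun (dist_eq_zero.1 hb) n).symm
    _ = 1 := hfU n hbU

lemma PseudocompactSpace.exists_mem_eq_of_dense (hX : PseudocompactSpace X) (hd : Dense X)
    {h : B → ℝ} (hh : Continuous h) (p : B) : ∃ x ∈ X, h x = h p := by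
  by_contra! hne
  have hpos : ∀ x : X, 0 < |h x - h p| := fun x => abs_pos.2 (sub_ne_zero.2 (hne x x.2))
  obtain ⟨M, hM⟩ := hX (fun x => |h x - h p|⁻¹)
    (((hh.comp continuous_subtype_val).sub continuous_const).abs.inv₀ fun x => (hpos x).ne')
  have hclosed : IsClosed {b | 1 ≤ M * |h b - h p|} :=
    isClosed_le continuous_const (continuous_const.mul (hh.sub continuous_const).abs)
  have hXsub : X ⊆ {b | 1 ≤ M * |h b - h p|} := fun x hx =>
    (inv_le_iff_one_le_mul₀ (hpos ⟨x, hx⟩)).1 ((le_abs_self _).trans (hM ⟨x, hx⟩))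
  have hp : 1 ≤ M * |h p - h p| := closure_minimal hXsub hclosed (hd p)
  norm_num at hp

theorem AlmostPSpace.of_pseudocompactSpace_dense [CompletelyRegularSpace B] (hd : Dense X)
    (hX : PseudocompactSpace X) (hP : AlmostPSpace X) : AlmostPSpace B := by
  refine almostPSpace_iff_isGδ.2 fun G hG ⟨p, hp⟩ => ?_
  obtain ⟨h, hh, hhp, hZG⟩ := exists_continuous_preimage_zero_subset_of_isGδ hG hp
  obtain ⟨x, hxX, hx⟩ := hX.exists_mem_eq_of_dense hd hh p
  have hZ : IsClosed (h ⁻¹' {0}) := isClosed_singleton.preimage hh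
  have hZGδ : IsGδ (Subtype.val ⁻¹' (h ⁻¹' {0}) : Set X) :=
    ((IsGδ.singleton 0).preimage hh).preimage continuous_subtype_val
  have hint := almostPSpace_iff_isGδ.1 hP _ hZGδ ⟨⟨x, hxX⟩, hx.trans hhp⟩
  exact (interior_nonempty_of_interior_preimage_val_nonempty hd hZ hint).mono (interior_mono hZG)

end AlmostP

section Clopen

variable {Y : Type*} [TopologicalSpace Y]

lemma isClopen_biUnion_of_locallyFinite {ι : Type*} {C : ι → Set Y} (hC : LocallyFinite C)
    (hclopen : ∀ i, IsClopen (C i)) (s : Set ι) : IsClopen (⋃ i ∈ s, C i) := by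
  rw [biUnion_eq_iUnion]
  exact ⟨(hC.comp_injective Subtype.val_injective).isClosed_iUnion fun i => (hclopen i).isClosed,
    isOpen_iUnion fun i => (hclopen i).isOpen⟩

lemma locallyFinite_of_forall_natCast_lt {f : Y → ℝ} (hf : Continuous f) {C : ℕ → Set Y}
    (hC : ∀ k, ∀ x ∈ C k, (k : ℝ) < f x) : LocallyFinite C := by
  intro y
  obtain ⟨N, hN⟩ := exists_nat_gt (f y)
  refine ⟨{z | f z < N}, (isOpen_lt hf continuous_const).mem_nhds hN,
    (finite_lt_nat N).subset ?_⟩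
  rintro k ⟨z, hzC, hzN⟩
  exact Nat.cast_lt.1 ((hC k z hzC).trans hzN)

theorem pseudocompactSpace_of_iInter_isClopen_nonempty
    (hY : IsTopologicalBasis {s : Set Y | IsClopen s})
    (hE : ∀ E : ℕ → Set Y, Antitone E → (∀ n, IsClopen (E n)) → (∀ n, (E n).Nonempty) →
      (⋂ n, E n).Nonempty) :
    PseudocompactSpace Y := by
  intro f hf
  by_contra! hunbounded
  have hclopen_nbhd : ∀ k : ℕ, ∃ C, IsClopen C ∧ C.Nonempty ∧ ∀ x ∈ C, (k : ℝ) < |f x| := by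
    intro k
    obtain ⟨x, hx⟩ := hunbounded k
    obtain ⟨C, hC, hxC, hCsub⟩ :=
      hY.exists_subset_of_mem_open hx (isOpen_lt continuous_const hf.abs)
    exact ⟨C, hC, ⟨x, hxC⟩, hCsub⟩
  choose C hC hne hlt using hclopen_nbhd
  have hfin : LocallyFinite C := locallyFinite_of_forall_natCast_lt hf.abs hlt
  obtain ⟨x, hx⟩ := hE (fun n => ⋃ k ∈ Ici n, C k)
    (fun m n hmn => biUnion_subset_biUnion_left (Ici_subset_Ici.2 hmn))
    (fun n => isClopen_biUnion_of_locallyFinite hfin hC (Ici n))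
    (fun n => (hne n).mono (subset_biUnion_of_mem self_mem_Ici))
  obtain ⟨N, hN⟩ := exists_nat_gt |f x|
  obtain ⟨k, hNk, hxk⟩ := mem_iUnion₂.1 (mem_iInter.1 hx N)
  exact (hN.trans_le (Nat.cast_le.2 hNk)).not_gt (hlt k x hxk)

lemma isTopologicalBasis_isClopen_subtype (hY : IsTopologicalBasis {s : Set Y | IsClopen s})
    (X : Set Y) : IsTopologicalBasis {s : Set X | IsClopen s} := by
  refine (hY.isInducing IsInducing.subtypeVal).of_isOpen_of_subset (fun _ hs => hs.isOpen) ?_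
  rintro _ ⟨C, hC, rfl⟩
  exact IsClopen.preimage hC continuous_subtype_val

lemma isClopen_closure_image_val {X : Set Y} (hd : Dense X)
    (hext : ∀ g : X → Bool, Continuous g → ∃ G : Y → Bool, Continuous G ∧ ∀ x : X, G x = g x)
    {E : Set X} (hE : IsClopen E) : IsClopen (closure (Subtype.val '' E)) := by
  obtain ⟨G, hG, hGE⟩ := hext E.boolIndicator ((continuous_boolIndicator_iff_isClopen E).2 hE)
  have hF : IsClopen (G ⁻¹' {true}) := (isClopen_discrete _).preimage hG
  have htrace : Subtype.val ⁻¹' (G ⁻¹' {true}) = E := by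
    ext x
    rw [mem_iff_boolIndicator E, ← hGE]
    rfl
  have himage : Subtype.val '' E = G ⁻¹' {true} ∩ X := by
    rw [← htrace, Subtype.image_preimage_coe, inter_comm]
  have hclosure : closure (Subtype.val '' E) = G ⁻¹' {true} := by
    rw [himage]
    exact (closure_minimal inter_subset_left hF.isClosed).antisymm
      (hd.open_subset_closure_inter hF.isOpen)
  rwa [hclosure]

end Clopen

theorem AlmostPSpace.pseudocompactSpace_of_dense {B : Type*} [TopologicalSpace B] [CompactSpace B]
    (hB : IsTopologicalBasis {s : Set B | IsClopen s}) {X : Set B} (hd : Dense X)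
    (hext : ∀ g : X → Bool, Continuous g → ∃ G : B → Bool, Continuous G ∧ ∀ x : X, G x = g x)
    (hP : AlmostPSpace B) : PseudocompactSpace X := by
  refine pseudocompactSpace_of_iInter_isClopen_nonempty (isTopologicalBasis_isClopen_subtype hB X)
    fun E hanti hE hne => ?_
  let K : ℕ → Set B := fun n => closure (Subtype.val '' E n)
  have hK : ∀ n, IsClopen (K n) := fun n => isClopen_closure_image_val hd hext (hE n)
  have htrace : ∀ n, Subtype.val ⁻¹' K n = E n := fun n => by
    rw [← IsInducing.subtypeVal.closure_eq_preimage_closure_image, (hE n).isClosed.closure_eq]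
  have hKne : (⋂ n, K n).Nonempty :=
    IsCompact.nonempty_iInter_of_sequence_nonempty_isCompact_isClosed K
      (fun n => closure_mono (image_mono (hanti n.le_succ)))
      (fun n => ((hne n).image _).closure) (hK 0).isClosed.isCompact fun n => (hK n).isClosed
  obtain ⟨x, hxK, hxX⟩ :=
    hP.interior_inter_dense_nonempty hd (.iInter_of_isOpen fun n => (hK n).isOpen) hKne
  refine ⟨⟨x, hxX⟩, mem_iInter.2 fun n => ?_⟩
  rw [← htrace n]
  exact mem_iInter.1 (interior_subset hxK) n

/-- The Banaschewski compactification `B` of a zero-dimensional space `X`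
is an almost `P`-space iff `X` is pseudocompact and an almost `P`-space. -/
theorem stmt_15 {B : Type*} [TopologicalSpace B] [CompactSpace B] [T2Space B]
    (hB : IsTopologicalBasis {s : Set B | IsClopen s})
    (X : Set B) (hd : Dense X)
    (hext : ∀ g : X → Bool, Continuous g → ∃ G : B → Bool, Continuous G ∧ ∀ x : X, G x = g x) :
    AlmostPSpace B ↔
      ((∀ f : X → ℝ, Continuous f → ∃ M : ℝ, ∀ x, |f x| ≤ M) ∧ AlmostPSpace X) := by
  constructor
  · exact fun hP => ⟨hP.pseudocompactSpace_of_dense hB hd hext, hP.subtype_of_dense hd⟩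
  · exact fun ⟨hX, hP⟩ => .of_pseudocompactSpace_dense hd hX hP
end
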